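/- Let 1/2 < κ < 1 and suppose E(X^+) < ∞ with W(y) > 0 for all y > 0. If I_κ(λ) < ∞ for some λ > 0, then lim_{x→∞} (W(x))^{κ/(1−κ)} / x^{(2κ−1)/(1−κ)} = 0. -/

import Mathlib

/-!
The function `W` is nondecreasing on `[0, ∞)`, because its integrand is nonnegative there
(`Wfn_mono`). Put `p = (2κ-1)/(1-κ)` and suppose `W(x)^{κ/(1-κ)} / x^p ≥ ε` at some `x ≥ 1`. For
`y ∈ (x, 2x]` monotonicity gives `(y^{(2κ-1)/κ} / W(y))^{κ/(1-κ)} ≤ 2^p / ε`, so the interval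
`(x, 2x]` contributes at least `exp(-λ 2^p / ε) / 2` to `I_κ(λ)`. This lower bound does not depend
on `x`, whereas the tails of the convergent integral `I_κ(λ)` tend to `0`
(`tendsto_setLIntegral_Ioi_zero`); hence the ratio is below `ε` for all large `x`.
-/

open MeasureTheory ProbabilityTheory Filter Set
open scoped ENNReal

noncomputable section

variable {Ω : Type*} [MeasurableSpace Ω]

/-- `W(y) = ∫_0^y ∫_{(z,∞)} x F(dx) dz`, where `F` is the distribution of `X`. -/
def Wfn (P : Measure Ω) (X : Ω → ℝ) (y : ℝ) : ℝ :=
  ∫ z in (0 : ℝ)..y, ∫ ω, (if z < X ω then X ω else 0) ∂P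

/-- `I_κ(λ) = ∫_1^∞ exp{-λ (y^{(2κ-1)/κ}/W(y))^{κ/(1-κ)}} dy/y ≤ ∞`. -/
def Ifn (P : Measure Ω) (X : Ω → ℝ) (κ lam : ℝ) : ℝ≥0∞ :=
  ∫⁻ y in Set.Ioi (1 : ℝ),
    ENNReal.ofReal
      (Real.exp (-lam * (y ^ ((2 * κ - 1) / κ) / Wfn P X y) ^ (κ / (1 - κ))) / y)

/-- Only `X⁺` is assumed integrable, hence the restriction to `0 ≤ z`. -/
lemma integrable_trunc (P : Measure Ω) (X : Ω → ℝ) (hmeas : Measurable X)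
    (hplus : Integrable (fun ω => max (X ω) 0) P) {z : ℝ} (hz : 0 ≤ z) :
    Integrable (fun ω => if z < X ω then X ω else 0) P := by
  refine hplus.mono ?_ (Eventually.of_forall fun ω => ?_)
  · exact (Measurable.ite (measurableSet_lt measurable_const hmeas) hmeas
      measurable_const).aestronglyMeasurable
  · rw [Real.norm_of_nonneg (le_max_right _ _)]
    split_ifs with h
    · rw [Real.norm_of_nonneg (hz.trans h.le)]
      exact le_max_left _ _
    · simp

lemma Wfn_mono (P : Measure Ω) (X : Ω → ℝ) (hmeas : Measurable X)
    (hplus : Integrable (fun ω => max (X ω) 0) P) {x y : ℝ} (hx : 0 ≤ x) (hxy : x ≤ y) :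
    Wfn P X x ≤ Wfn P X y := by
  unfold Wfn
  refine intervalIntegral.integral_mono_interval le_rfl hx hxy ?_ ?_
  · filter_upwards [ae_restrict_mem measurableSet_Ioc] with z hz
    refine integral_nonneg fun ω => ?_
    show (0 : ℝ) ≤ if z < X ω then X ω else 0
    split_ifs with h
    · exact hz.1.le.trans h.le
    · exact le_rfl
  · -- The inner integral is nonincreasing in `z ≥ 0`, hence interval integrable.
    apply AntitoneOn.intervalIntegrable
    rw [uIcc_of_le (hx.trans hxy)]
    intro z hz w hw hzw
    refine integral_mono (integrable_trunc P X hmeas hplus hw.1)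
      (integrable_trunc P X hmeas hplus hz.1) fun ω => ?_
    show (if w < X ω then X ω else 0) ≤ if z < X ω then X ω else 0
    have := hz.1
    split_ifs <;> linarith

/-- Measurability of `f` is not needed: on measurable sets the lower integral of `f` is the measure
with density `f`, which is continuous from above. -/
lemma tendsto_setLIntegral_Ioi_zero (f : ℝ → ℝ≥0∞) {a : ℝ} (hf : ∫⁻ y in Ioi a, f y < ⊤) :
    Tendsto (fun x : ℝ => ∫⁻ y in Ioi x, f y) atTop (nhds 0) := by
  have h := tendsto_measure_iInter_atTop (μ := volume.withDensity f) (s := fun x : ℝ => Ioi x)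
    (fun x => measurableSet_Ioi.nullMeasurableSet) (fun x y h => Ioi_subset_Ioi h)
    ⟨a, by rw [withDensity_apply _ measurableSet_Ioi]; exact hf.ne⟩
  have h0 : (⋂ x : ℝ, Ioi x) = ∅ := by
    ext y
    simp only [mem_iInter, mem_Ioi, mem_empty_iff_false, iff_false, not_forall, not_lt]
    exact ⟨y, le_rfl⟩
  rw [h0, measure_empty] at h
  refine h.congr fun x => ?_
  exact withDensity_apply _ measurableSet_Ioi

/-- For `1/2 < κ < 1`, if `E(X⁺) < ∞`, `W(y) > 0` for `y > 0` and `I_κ(λ) < ∞` for some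
`λ > 0`, then `W(x)^{κ/(1-κ)} / x^{(2κ-1)/(1-κ)} → 0` as `x → ∞`. -/
theorem stmt18 (P : Measure Ω) [IsProbabilityMeasure P] (X : Ω → ℝ)
    (hmeas : Measurable X) (hneg : 0 < P {ω | X ω < 0}) (hpos : 0 < P {ω | 0 ≤ X ω})
    (hplus : Integrable (fun ω => max (X ω) 0) P)
    (κ : ℝ) (hκ1 : 1 / 2 < κ) (hκ2 : κ < 1)
    (hW : ∀ y : ℝ, 0 < y → 0 < Wfn P X y)
    (hI : ∃ lam : ℝ, 0 < lam ∧ Ifn P X κ lam < ⊤) :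
    Filter.Tendsto
      (fun x : ℝ => Wfn P X x ^ (κ / (1 - κ)) / x ^ ((2 * κ - 1) / (1 - κ)))
      Filter.atTop (nhds 0) := by
  obtain ⟨lam, hlam, hfin⟩ := hI
  have hκ0 : 0 < κ := by linarith
  have h1κ : 0 < 1 - κ := by linarith
  set a := (2 * κ - 1) / κ with ha
  set b := κ / (1 - κ) with hb
  set p := (2 * κ - 1) / (1 - κ) with hp
  have hab : a * b = p := by rw [ha, hb, hp]; field_simp
  have ha0 : 0 < a := div_pos (by linarith) hκ0
  have hb0 : 0 < b := div_pos hκ0 h1κ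
  have htail := tendsto_setLIntegral_Ioi_zero _ hfin
  rw [tendsto_order]
  constructor
  · intro r hr
    filter_upwards [eventually_gt_atTop 0] with x hx
    exact hr.trans_le
      (div_nonneg (Real.rpow_nonneg (hW x hx).le _) (Real.rpow_nonneg hx.le _))
  intro ε hε
  set c := Real.exp (-lam * (2 ^ p / ε)) with hc
  have hc0 : 0 < c := Real.exp_pos _
  have hev := (tendsto_order.1 htail).2 (ENNReal.ofReal (c / 2))
    (ENNReal.ofReal_pos.2 (by positivity))
  filter_upwards [hev, eventually_ge_atTop 1] with x hxt hx1
  by_contra hge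
  rw [not_lt] at hge
  have hx0 : 0 < x := by linarith
  have hWx := hW x hx0
  refine absurd hxt (not_lt.2 ?_)
  have hpt : ∀ y ∈ Ioc x (2 * x), ENNReal.ofReal (c / (2 * x)) ≤
      ENNReal.ofReal (Real.exp (-lam * (y ^ a / Wfn P X y) ^ b) / y) := by
    intro y hy
    have hy0 : 0 < y := hx0.trans hy.1
    have hWm := Wfn_mono P X hmeas hplus hx0.le hy.1.le
    have h1 : (y ^ a / Wfn P X y) ^ b ≤ 2 ^ p / ε := by
      calc (y ^ a / Wfn P X y) ^ b ≤ ((2 * x) ^ a / Wfn P X x) ^ b := by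
            have := hW y hy0
            have := Real.rpow_le_rpow hy0.le hy.2 ha0.le
            gcongr
        _ = 2 ^ p / (Wfn P X x ^ b / x ^ p) := by
            rw [Real.div_rpow (by positivity) hWx.le, ← Real.rpow_mul (by positivity), hab,
              Real.mul_rpow (by norm_num) hx0.le, div_div_eq_mul_div]
        _ ≤ 2 ^ p / ε := by gcongr
    apply ENNReal.ofReal_le_ofReal
    have h2 : c ≤ Real.exp (-lam * (y ^ a / Wfn P X y) ^ b) := by
      rw [hc]
      apply Real.exp_le_exp.2
      have := mul_le_mul_of_nonneg_left h1 hlam.le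
      linarith
    exact div_le_div₀ (Real.exp_pos _).le h2 hy0 hy.2
  calc ENNReal.ofReal (c / 2) = ∫⁻ _ in Ioc x (2 * x), ENNReal.ofReal (c / (2 * x)) := by
        rw [setLIntegral_const, Real.volume_Ioc, ← ENNReal.ofReal_mul (by positivity)]
        congr 1
        field_simp
        ring
    _ ≤ ∫⁻ y in Ioc x (2 * x),
          ENNReal.ofReal (Real.exp (-lam * (y ^ a / Wfn P X y) ^ b) / y) :=
        setLIntegral_mono' measurableSet_Ioc hpt
    _ ≤ _ := lintegral_mono_set Ioc_subset_Ioi_self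

end
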